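/- Let F be a field and let L be a field extension of F. Let f be a monic irreducible polynomial in F[X], and let g be a monic irreducible polynomial in L[X] that divides the image of f under the inclusion map F[X] → L[X]. Let r be the multiplicity of g as an irreducible factor of the image of f (the largest integer r such that g^r divides the image of f in L[X]). Then r = 1 if F has characteristic 0, and r is a power of p if F has characteristic p > 0. -/

import Mathlib

open Polynomial

/-!
In a domain over `L` in which `g` has a root `x`, the multiplicity of `x` as a root of `f` is the
multiplicity of `g` in `f` times the multiplicity of `x` as a root of `g`. An irreducible `f` is
`h(X ^ q ^ n)` with `h` separable and `q` the exponential characteristic, so all roots of `f` in any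
extension have multiplicity `q ^ n`. Hence the multiplicity of `g` in `f` divides `q ^ n`.
-/

section RootMultiplicity

variable {R S : Type*}

theorem hasSeparableContraction_map [CommSemiring R] [CommSemiring S] {q : ℕ} {f : R[X]}
    (hf : f.HasSeparableContraction q) (i : R →+* S) : (f.map i).HasSeparableContraction q := by
  obtain ⟨h, hsep, n, rfl⟩ := hf
  exact ⟨h.map i, hsep.map, n, (map_expand ..).symm⟩

theorem exists_rootMultiplicity_eq_expChar_pow [CommRing R] [Nontrivial R] {q : ℕ} [ExpChar R q]
    {f : R[X]} (hf : f.HasSeparableContraction q) {x : R} (hx : f.IsRoot x) :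
    ∃ n : ℕ, f.rootMultiplicity x = q ^ n := by
  obtain ⟨h, hsep, n, rfl⟩ := hf
  have hroot : h.IsRoot (x ^ q ^ n) := by rwa [IsRoot, expand_eval] at hx
  have hmult : h.rootMultiplicity (x ^ q ^ n) = 1 :=
    (rootMultiplicity_le_one_of_separable hsep _).antisymm
      ((rootMultiplicity_pos hsep.ne_zero).2 hroot)
  exact ⟨n, by rw [rootMultiplicity_expand_pow, hmult, mul_one]⟩

theorem rootMultiplicity_pow [CommRing R] [IsDomain R] (f : R[X]) (n : ℕ) (x : R) :
    (f ^ n).rootMultiplicity x = n * f.rootMultiplicity x := by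
  classical
  rw [← count_roots, ← count_roots, roots_pow, Multiset.count_nsmul]

theorem not_isRoot_map_of_isCoprime [CommSemiring R] [CommSemiring S] [Nontrivial S] {i : R →+* S}
    {g h : R[X]} (hgh : IsCoprime g h) {x : S} (hx : (g.map i).IsRoot x) :
    ¬ (h.map i).IsRoot x := by
  intro hx'
  have hcop := hgh.map (eval₂RingHom i x)
  simp only [coe_eval₂RingHom, eval₂_eq_eval_map, hx.eq_zero, hx'.eq_zero] at hcop
  exact not_isCoprime_zero_zero hcop

theorem rootMultiplicity_map_eq_multiplicity_mul [Field R] [CommRing S] [IsDomain S] (i : R →+* S)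
    {f g : R[X]} (hf : f ≠ 0) (hg : Irreducible g) {x : S} (hx : (g.map i).IsRoot x) :
    (f.map i).rootMultiplicity x = multiplicity g f * (g.map i).rootMultiplicity x := by
  obtain ⟨c, hfc, hgc⟩ :=
    (FiniteMultiplicity.of_prime_left hg.prime hf).exists_eq_pow_mul_and_not_dvd
  have hc : ¬ (c.map i).IsRoot x :=
    not_isRoot_map_of_isCoprime (hg.coprime_iff_not_dvd.2 hgc) hx
  have hmap : f.map i = g.map i ^ multiplicity g f * c.map i := by
    rw [← Polynomial.map_pow, ← Polynomial.map_mul, ← hfc]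
  have hne : g.map i ^ multiplicity g f * c.map i ≠ 0 := hmap ▸ Polynomial.map_ne_zero hf
  rw [hmap, rootMultiplicity_mul hne, rootMultiplicity_pow, rootMultiplicity_eq_zero hc, add_zero]

end RootMultiplicity

theorem exists_eq_expChar_pow_of_dvd (R : Type*) [AddMonoidWithOne R] {q : ℕ} [ExpChar R q]
    {m n : ℕ} (h : m ∣ q ^ n) : ∃ k : ℕ, m = q ^ k := by
  rcases expChar_is_prime_or_one R q with hq | rfl
  · obtain ⟨k, -, hk⟩ := (Nat.dvd_prime_pow hq).1 h
    exact ⟨k, hk⟩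
  · exact ⟨0, by simpa using h⟩

theorem multiplicity_of_irreducible_factor_over_extension_general
    {R L : Type*} [CommSemiring R] [Field L] [Algebra R L] {q : ℕ} [ExpChar L q]
    {f : R[X]} (hf : f.HasSeparableContraction q) {g : L[X]} (hg : Irreducible g)
    (hdvd : g ∣ f.map (algebraMap R L)) :
    ∃ k : ℕ, multiplicity g (f.map (algebraMap R L)) = q ^ k := by
  set fL := f.map (algebraMap R L)
  let j := algebraMap L (AlgebraicClosure L)
  have : ExpChar (AlgebraicClosure L) q := expChar_of_injective_ringHom j.injective q
  have hfL : fL.HasSeparableContraction q := hasSeparableContraction_map hf _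
  have hfL0 : fL ≠ 0 := by
    obtain ⟨h, hsep, n, hn⟩ := hfL
    exact hn ▸ (expand_ne_zero (expChar_pow_pos L q n)).2 hsep.ne_zero
  obtain ⟨x, hx⟩ := IsAlgClosed.exists_root (g.map j)
    ((degree_map g j).trans_ne (degree_pos_of_irreducible hg).ne')
  obtain ⟨n, hn⟩ := exists_rootMultiplicity_eq_expChar_pow
    (hasSeparableContraction_map hfL j) (hx.dvd (Polynomial.map_dvd j hdvd))
  rw [rootMultiplicity_map_eq_multiplicity_mul j hfL0 hg hx] at hn
  exact exists_eq_expChar_pow_of_dvd L (Dvd.intro _ hn)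

/-- Let `F` be a field and `L` a field extension of `F`.  Let `f` be a monic
irreducible polynomial in `F[X]` and `g` a monic irreducible polynomial in `L[X]` dividing the
image of `f` in `L[X]`.  If `r` is the multiplicity of `g` as an irreducible factor of the image
of `f` (i.e. the largest `r` with `g ^ r ∣ f.map (algebraMap F L)`), then `r = 1` if `F` has
characteristic `0`, and `r` is a power of `p` if `F` has characteristic `p > 0`. -/
theorem multiplicity_of_irreducible_factor_over_extension
    (F L : Type*) [Field F] [Field L] [Algebra F L]
    (f : F[X]) (hfm : f.Monic) (hfirr : Irreducible f)
    (g : L[X]) (hgm : g.Monic) (hgirr : Irreducible g)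
    (hdvd : g ∣ f.map (algebraMap F L))
    (r : ℕ) (hr : g ^ r ∣ f.map (algebraMap F L))
    (hrmax : ¬ g ^ (r + 1) ∣ f.map (algebraMap F L)) :
    (CharZero F → r = 1) ∧
      (∀ p : ℕ, 0 < p → CharP F p → ∃ k : ℕ, r = p ^ k) := by
  have hmult : multiplicity g (f.map (algebraMap F L)) = r :=
    multiplicity_eq_of_dvd_of_not_dvd hr hrmax
  have exists_eq_pow (q : ℕ) [ExpChar F q] : ∃ k : ℕ, r = q ^ k := by
    have : ExpChar L q := expChar_of_injective_algebraMap (algebraMap F L).injective q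
    exact hmult ▸ multiplicity_of_irreducible_factor_over_extension_general
      (hfirr.hasSeparableContraction q) hgirr hdvd
  refine ⟨fun _ ↦ by simpa using exists_eq_pow 1, fun p hp _ ↦ ?_⟩
  have : ExpChar F p := .prime ((CharP.char_is_prime_or_zero F p).resolve_right hp.ne')
  exact exists_eq_pow p
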